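/- For every n ≥ 1, dim_ℂ Ĥ^n_f = dim_ℂ Ĥ^{n−1}_e + (r+s−2)(r+s−1)^{n−1}. -/

import Mathlib

open Finsupp Submodule LinearMap

set_option maxSynthPendingDepth 2

namespace NilpotentCohomology

/-- The big space of cochains of all degrees: formal ℂ-linear combinations of
basis symbols `φ^I_x` indexed by a multi-index `I : List (Fin m)` and an output
index `x : Fin m`. -/
abbrev Cochain (m : ℕ) : Type := (List (Fin m) × Fin m) →₀ ℂ

/-- Parity of an index: `0` if the index is among the first `r` (even) ones, `1` otherwise. -/
def par (r : ℕ) {m : ℕ} (i : Fin m) : ℕ := if (i : ℕ) < r then 0 else 1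

/-- Parity of a multi-index: the sum of the parities of its entries. -/
def lpar (r : ℕ) {m : ℕ} (I : List (Fin m)) : ℕ := (I.map (par r)).sum

/-- Parity of a basis cochain `φ^I_x`: `|I| + |x|`. -/
def ppar (r : ℕ) {m : ℕ} (p : List (Fin m) × Fin m) : ℕ := lpar r p.1 + par r p.2

/-- `(I, J, k)`: the multi-index `I` with its `k`-th entry (0-indexed) replaced by the string `J`. -/
def insertAt {m : ℕ} (I J : List (Fin m)) (k : ℕ) : List (Fin m) :=
  I.take k ++ J ++ I.drop (k + 1)

/-- The insertion product of two basis cochains `φ^I_x ∘ φ^J_y`. -/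
noncomputable def basisComp (r : ℕ) {m : ℕ} (p q : List (Fin m) × Fin m) : Cochain m :=
  ∑ k : Fin p.1.length,
    if p.1.get k = q.2 then
      ((-1 : ℂ) ^ (lpar r (p.1.take ((k : ℕ) + 1)) * ppar r q)) •
        Finsupp.single (insertAt p.1 q.1 (k : ℕ), p.2) (1 : ℂ)
    else 0

/-- The insertion product, extended bilinearly. -/
noncomputable def comp (r : ℕ) {m : ℕ} :
    Cochain m →ₗ[ℂ] Cochain m →ₗ[ℂ] Cochain m :=
  Finsupp.lsum ℂ fun p => LinearMap.toSpanSingleton ℂ _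
    (Finsupp.lsum ℂ fun q => LinearMap.toSpanSingleton ℂ (Cochain m) (basisComp r p q))

/-- The bracket `[φ, ψ] = φ∘ψ − (−1)^{|φ||ψ|} ψ∘φ` of two parity-homogeneous cochains
of parities `pf` and `pg`. -/
noncomputable def bracket (r : ℕ) {m : ℕ} (pf pg : ℕ) (f g : Cochain m) : Cochain m :=
  comp r f g - ((-1 : ℂ) ^ (pf * pg)) • comp r g f

/-- The quadratic cochain `φ^{(a,a)}_b`. -/
noncomputable def dd {m : ℕ} (a b : Fin m) : Cochain m :=
  Finsupp.single ([a, a], b) (1 : ℂ)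

/-- The linear map multiplying each basis cochain by `(−1)^{its parity}`. -/
noncomputable def twist (r : ℕ) {m : ℕ} : Cochain m →ₗ[ℂ] Cochain m :=
  Finsupp.lsum ℂ fun p => LinearMap.toSpanSingleton ℂ (Cochain m)
    (((-1 : ℂ) ^ (ppar r p)) • Finsupp.single p (1 : ℂ))

/-- The coboundary operator `D(φ) = [d, φ] = d∘φ − (−1)^{|d||φ|} φ∘d` for the odd
codifferential `d = φ^{(a,a)}_b`, extended linearly from parity-homogeneous `φ`. -/
noncomputable def Dop (r : ℕ) {m : ℕ} (a b : Fin m) : Cochain m →ₗ[ℂ] Cochain m :=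
  comp r (dd a b) - ((comp r).flip (dd a b)) ∘ₗ twist r

/-- `C^n`: the span of the basis cochains `φ^I_x` with `I` of length `n`. -/
noncomputable def Cn (m n : ℕ) : Submodule ℂ (Cochain m) :=
  Submodule.span ℂ
    {f | ∃ I : List (Fin m), I.length = n ∧ ∃ x : Fin m, f = Finsupp.single (I, x) 1}

/-- `C^n_x`: the span of the basis cochains `φ^I_x` with `I` of length `n` and output `x`. -/
noncomputable def Cnx (m : ℕ) (n : ℕ) (x : Fin m) : Submodule ℂ (Cochain m) :=
  Submodule.span ℂ
    {f | ∃ I : List (Fin m), I.length = n ∧ f = Finsupp.single (I, x) 1}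

/-- The projection onto the cochains with output index `x`. -/
noncomputable def projOut {m : ℕ} (x : Fin m) : Cochain m →ₗ[ℂ] Cochain m :=
  Finsupp.lsum ℂ fun p => LinearMap.toSpanSingleton ℂ (Cochain m)
    (if p.2 = x then Finsupp.single p (1 : ℂ) else 0)

/-- `λ^J (φ^I_x) = φ^{JI}_x`, extended linearly. -/
noncomputable def lam {m : ℕ} (J : List (Fin m)) : Cochain m →ₗ[ℂ] Cochain m :=
  Finsupp.lsum ℂ fun p => LinearMap.toSpanSingleton ℂ (Cochain m)
    (Finsupp.single (J ++ p.1, p.2) (1 : ℂ))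

/-- `ρ^J (φ^I_x) = (−1)^{|I||J|} φ^{IJ}_x`, extended linearly. -/
noncomputable def rho (r : ℕ) {m : ℕ} (J : List (Fin m)) : Cochain m →ₗ[ℂ] Cochain m :=
  Finsupp.lsum ℂ fun p => LinearMap.toSpanSingleton ℂ (Cochain m)
    (((-1 : ℂ) ^ (lpar r p.1 * lpar r J)) • Finsupp.single (p.1 ++ J, p.2) (1 : ℂ))

/-- `θ = λ^{(a,b)} − λ^{(b,a)}`. -/
noncomputable def theta {m : ℕ} (a b : Fin m) : Cochain m →ₗ[ℂ] Cochain m :=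
  lam [a, b] - lam [b, a]

/-- `τ`: swaps the outputs `a` and `b` of basis cochains (identity on other outputs). -/
noncomputable def tau {m : ℕ} (a b : Fin m) : Cochain m →ₗ[ℂ] Cochain m :=
  Finsupp.lsum ℂ fun p => LinearMap.toSpanSingleton ℂ (Cochain m)
    (Finsupp.single (p.1, if p.2 = a then b else if p.2 = b then a else p.2) (1 : ℂ))

/-! ### Full cohomology -/

/-- Cocycles of degree `n` of the full complex. -/
noncomputable def Zfull (r : ℕ) {m : ℕ} (a b : Fin m) (n : ℕ) : Submodule ℂ (Cochain m) :=
  Cn m n ⊓ LinearMap.ker (Dop r a b)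

/-- Coboundaries of degree `n` of the full complex (`C^{-1} = 0`). -/
noncomputable def Bfull (r : ℕ) {m : ℕ} (a b : Fin m) : ℕ → Submodule ℂ (Cochain m)
  | 0 => ⊥
  | n + 1 => Submodule.map (Dop r a b) (Cn m n)

/-- The full cohomology `H^n = Z^n / B^n`. -/
noncomputable abbrev Hfull (r : ℕ) {m : ℕ} (a b : Fin m) (n : ℕ) : Type :=
  Zfull r a b n ⧸ (Bfull r a b n).comap (Zfull r a b n).subtype

/-! ### The restricted complexes -/

/-- The restricted differential `D_x`: the `e₁`-output component of `D` when `x = a`,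
and `D` itself (which preserves output `x`) otherwise. -/
noncomputable def Dx (r : ℕ) {m : ℕ} (a b x : Fin m) : Cochain m →ₗ[ℂ] Cochain m :=
  if x = a then projOut a ∘ₗ Dop r a b else Dop r a b

/-- Cocycles of the restricted complex `(C^•_x, D_x)`. -/
noncomputable def Zx (r : ℕ) {m : ℕ} (a b x : Fin m) (n : ℕ) : Submodule ℂ (Cochain m) :=
  Cnx m n x ⊓ LinearMap.ker (Dx r a b x)

/-- Coboundaries of the restricted complex `(C^•_x, D_x)` (`C^{-1}_x = 0`). -/
noncomputable def Bx (r : ℕ) {m : ℕ} (a b x : Fin m) : ℕ → Submodule ℂ (Cochain m)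
  | 0 => ⊥
  | n + 1 => Submodule.map (Dx r a b x) (Cnx m n x)

/-- Cohomology `H^n_x` of the restricted complex `(C^•_x, D_x)`. -/
noncomputable abbrev Hx (r : ℕ) {m : ℕ} (a b x : Fin m) (n : ℕ) : Type :=
  Zx r a b x n ⧸ (Bx r a b x n).comap (Zx r a b x n).subtype

/-! ### The subcomplex `C^•_a ⊕ C^•_b` and the `b`-output complex -/

/-- `C^n_a ⊕ C^n_b` (internal direct sum). -/
noncomputable def Cpair (m : ℕ) (a b : Fin m) (n : ℕ) : Submodule ℂ (Cochain m) :=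
  Cnx m n a ⊔ Cnx m n b

noncomputable def Zpair (r : ℕ) {m : ℕ} (a b : Fin m) (n : ℕ) : Submodule ℂ (Cochain m) :=
  Cpair m a b n ⊓ LinearMap.ker (Dop r a b)

noncomputable def Bpair (r : ℕ) {m : ℕ} (a b : Fin m) : ℕ → Submodule ℂ (Cochain m)
  | 0 => ⊥
  | n + 1 => Submodule.map (Dop r a b) (Cpair m a b n)

/-- `H^n`: the cohomology of the subcomplex `(C^•_a ⊕ C^•_b, D)`. -/
noncomputable abbrev Hpair (r : ℕ) {m : ℕ} (a b : Fin m) (n : ℕ) : Type :=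
  Zpair r a b n ⧸ (Bpair r a b n).comap (Zpair r a b n).subtype

/-- Cocycles of `(C^•_b, D_b)`, where `D_b` is the restriction of `D`. -/
noncomputable def Zm (r : ℕ) {m : ℕ} (a b : Fin m) (n : ℕ) : Submodule ℂ (Cochain m) :=
  Cnx m n b ⊓ LinearMap.ker (Dop r a b)

noncomputable def Bm (r : ℕ) {m : ℕ} (a b : Fin m) : ℕ → Submodule ℂ (Cochain m)
  | 0 => ⊥
  | n + 1 => Submodule.map (Dop r a b) (Cnx m n b)

/-- `H^n_b`: the cohomology of `(C^•_b, D_b)`. -/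
noncomputable abbrev Hm (r : ℕ) {m : ℕ} (a b : Fin m) (n : ℕ) : Type :=
  Zm r a b n ⧸ (Bm r a b n).comap (Zm r a b n).subtype

lemma Zm_le_Zpair (r : ℕ) {m : ℕ} (a b : Fin m) (n : ℕ) :
    Zm r a b n ≤ Zpair r a b n :=
  inf_le_inf le_sup_right le_rfl

lemma Bm_le_Bpair (r : ℕ) {m : ℕ} (a b : Fin m) : ∀ n : ℕ, Bm r a b n ≤ Bpair r a b n
  | 0 => bot_le
  | _ + 1 => Submodule.map_mono le_sup_right

/-- The natural map `H^n_b → H^n` induced by the inclusion of cocycles. -/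
noncomputable def iotaHm (r : ℕ) {m : ℕ} (a b : Fin m) (n : ℕ) :
    Hm r a b n →ₗ[ℂ] Hpair r a b n :=
  Submodule.mapQ _ _ (Submodule.inclusion (Zm_le_Zpair r a b n))
    (fun z hz => Bm_le_Bpair r a b n hz)

/-- `Ĥ^n_f`: the image of `H^n_b` in `H^n`. -/
noncomputable def Hfhat (r : ℕ) {m : ℕ} (a b : Fin m) (n : ℕ) : Submodule ℂ (Hpair r a b n) :=
  LinearMap.range (iotaHm r a b n)

/-- `Ĥ^n_e = H^n / Ĥ^n_f`. -/
noncomputable abbrev Hehat (r : ℕ) {m : ℕ} (a b : Fin m) (n : ℕ) : Type :=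
  Hpair r a b n ⧸ Hfhat r a b n

/-! ### The spaces `Ĉ^n_x` of nontrivial cocycles -/

/-- The recursively defined subspaces `Ĉ^n_x` of nontrivial cocycles. -/
noncomputable def Chat (r : ℕ) {m : ℕ} (a b x : Fin m) : ℕ → Submodule ℂ (Cochain m)
  | 0 => Submodule.span ℂ {Finsupp.single (([] : List (Fin m)), x) 1}
  | 1 => Submodule.span ℂ
      ({Finsupp.single ([a], x) 1} ∪
        ⋃ c ∈ {c : Fin m | c ≠ a ∧ c ≠ b}, lam [c] '' (Chat r a b x 0 : Set (Cochain m)))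
  | n + 2 => Submodule.span ℂ
      ((⋃ c ∈ {c : Fin m | c ≠ a ∧ c ≠ b},
          lam [c] '' (Chat r a b x (n + 1) : Set (Cochain m))) ∪
        (theta a b '' (Chat r a b x n : Set (Cochain m))) ∪
        ⋃ c ∈ {c : Fin m | c ≠ a ∧ c ≠ b},
          (lam [a] + rho r [a]) '' (lam [c] '' (Chat r a b x n : Set (Cochain m))))

/-!
Projecting onto the output `a` gives a short exact sequence `0 → C_b → C_a ⊕ C_b → C_a → 0` of
complexes.  In its long exact sequence `Ĥ_e^n` is the kernel, and `Ĥ_f^{n+1}` the cokernel, of the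
connecting map `H_a^n → H_b^{n+1}`, so `dim Ĥ_f^{n+1} - dim Ĥ_e^n = dim H_b^{n+1} - dim H_a^n`.

On a single output the differential is, up to sign, `Q φ = (-1)^{|φ|} φ ∘ d`.  It commutes with
prepending a letter `i ≠ b`, while `Q (λ_b f) = λ_b (Q f) + λ_a λ_a (twist f)`.  Sorting the
cocycles by their first letter, and using that in cohomology left multiplication by `a` has its
image equal to its kernel, gives `dim H_x^n = (m - 1)^n` for every output `x`.
-/

section RankNullity

variable {K V W : Type*} [DivisionRing K] [AddCommGroup V] [Module K V] [AddCommGroup W]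
  [Module K W]

lemma finrank_map_add_finrank_inf_ker (P : Submodule K V) [FiniteDimensional K P] (f : V →ₗ[K] W) :
    Module.finrank K (P.map f) + Module.finrank K ↥(P ⊓ ker f) = Module.finrank K P := by
  rw [← LinearMap.finrank_range_add_finrank_ker (f.domRestrict P), LinearMap.range_domRestrict,
    LinearMap.ker_domRestrict, ← Submodule.finrank_map_subtype_eq P ((ker f).comap P.subtype),
    Submodule.map_comap_subtype]

lemma finrank_map_of_injective (P : Submodule K V) {f : V →ₗ[K] W} (hf : Function.Injective f) :
    Module.finrank K (P.map f) = Module.finrank K P :=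
  (Submodule.equivMapOfInjective f hf P).finrank_eq.symm

lemma finrank_quotient_comap_subtype (P N : Submodule K V) [FiniteDimensional K P] :
    Module.finrank K (P ⧸ N.comap P.subtype) + Module.finrank K ↥(P ⊓ N) = Module.finrank K P := by
  rw [← Submodule.finrank_quotient_add_finrank (N.comap P.subtype),
    ← Submodule.map_comap_subtype, Submodule.finrank_map_subtype_eq]

lemma finrank_range_mapQ_inclusion {P P' N N' : Submodule K V} [FiniteDimensional K P]
    (hP : P ≤ P')
    (hN : N.comap P.subtype ≤ (N'.comap P'.subtype).comap (Submodule.inclusion hP)) :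
    Module.finrank K (range (Submodule.mapQ (N.comap P.subtype) (N'.comap P'.subtype)
      (Submodule.inclusion hP) hN)) + Module.finrank K ↥(P ⊓ N') = Module.finrank K P := by
  have hker : ker ((N'.comap P'.subtype).mkQ ∘ₗ Submodule.inclusion hP) = N'.comap P.subtype := by
    rw [LinearMap.ker_comp, Submodule.ker_mkQ]
    rfl
  rw [← LinearMap.range_comp_of_range_eq_top _ (Submodule.range_mkQ (N.comap P.subtype)),
    Submodule.mapQ_mkQ, ← Submodule.map_comap_subtype, Submodule.finrank_map_subtype_eq, ← hker,
    LinearMap.finrank_range_add_finrank_ker]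

end RankNullity

section Letters

variable (r : ℕ) {m : ℕ}

@[simp]
lemma lpar_nil : lpar r ([] : List (Fin m)) = 0 := rfl

@[simp]
lemma lpar_cons (i : Fin m) (I : List (Fin m)) : lpar r (i :: I) = par r i + lpar r I := by
  simp [lpar]

@[simp]
lemma lpar_append (I J : List (Fin m)) : lpar r (I ++ J) = lpar r I + lpar r J := by
  simp [lpar]

@[simp]
lemma lam_single (J I : List (Fin m)) (x : Fin m) (c : ℂ) :
    lam J (single (I, x) c) = single (J ++ I, x) c := by
  simp [lam]

@[simp]
lemma rho_single (J I : List (Fin m)) (x : Fin m) (c : ℂ) :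
    rho r J (single (I, x) c) = single (I ++ J, x) ((-1 : ℂ) ^ (lpar r I * lpar r J) * c) := by
  simp [rho, mul_comm]

@[simp]
lemma twist_single (p : List (Fin m) × Fin m) (c : ℂ) :
    twist r (single p c) = single p ((-1 : ℂ) ^ ppar r p * c) := by
  simp [twist, mul_comm]

@[simp]
lemma comp_single_single (p q : List (Fin m) × Fin m) (c e : ℂ) :
    comp r (single p c) (single q e) = (c * e) • basisComp r p q := by
  simp [comp, smul_smul]

lemma single_cons (i : Fin m) (I : List (Fin m)) (x : Fin m) (c : ℂ) :
    (single (i :: I, x) c : Cochain m) = lam [i] (single (I, x) c) := by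
  simp

variable {V : Type*} [AddCommGroup V] [Module ℂ V]

lemma linearMap_ext_single {F G : Cochain m →ₗ[ℂ] V}
    (h : ∀ I x, F (single (I, x) 1) = G (single (I, x) 1)) : F = G :=
  Finsupp.lhom_ext' fun p => LinearMap.ext_ring (h p.1 p.2)

lemma linearMap_ext_lam {F G : Cochain m →ₗ[ℂ] V}
    (nil : ∀ x, F (single ([], x) 1) = G (single ([], x) 1))
    (cons : ∀ i f, F f = G f → F (lam [i] f) = G (lam [i] f)) : F = G := by
  refine linearMap_ext_single fun I x => ?_
  induction I with
  | nil => exact nil x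
  | cons i I ih => rw [single_cons]; exact cons i _ ih

lemma lam_injective (J : List (Fin m)) : Function.Injective (lam J) := by
  have hJ : lam J = Finsupp.lmapDomain ℂ ℂ (Prod.map (J ++ ·) id) :=
    linearMap_ext_single fun I x => by simp
  rw [hJ]
  exact Finsupp.mapDomain_injective ((List.append_right_injective J).prodMap Function.injective_id)

lemma twist_lam (J : List (Fin m)) (f : Cochain m) :
    twist r (lam J f) = (-1 : ℂ) ^ lpar r J • lam J (twist r f) := by
  suffices twist r ∘ₗ lam J = (-1 : ℂ) ^ lpar r J • lam J ∘ₗ twist r from LinearMap.congr_fun this f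
  refine linearMap_ext_single fun I x => ?_
  simp [ppar, pow_add, mul_assoc, -Finsupp.single_mul]

lemma twist_rho (J : List (Fin m)) (f : Cochain m) :
    twist r (rho r J f) = (-1 : ℂ) ^ lpar r J • rho r J (twist r f) := by
  suffices twist r ∘ₗ rho r J = (-1 : ℂ) ^ lpar r J • rho r J ∘ₗ twist r from
    LinearMap.congr_fun this f
  refine linearMap_ext_single fun I x => ?_
  simp only [LinearMap.comp_apply, LinearMap.smul_apply, rho_single, twist_single, smul_single,
    smul_eq_mul, ppar, lpar_append]
  congr 1
  ring

@[simp]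
lemma twist_twist (f : Cochain m) : twist r (twist r f) = f := by
  suffices twist r ∘ₗ twist r = LinearMap.id from LinearMap.congr_fun this f
  refine linearMap_ext_single fun I x => ?_
  simp [← mul_pow]

lemma rho_lam (J K : List (Fin m)) (f : Cochain m) :
    rho r K (lam J f) = (-1 : ℂ) ^ (lpar r J * lpar r K) • lam J (rho r K f) := by
  suffices rho r K ∘ₗ lam J = (-1 : ℂ) ^ (lpar r J * lpar r K) • lam J ∘ₗ rho r K from
    LinearMap.congr_fun this f
  refine linearMap_ext_single fun I x => ?_
  simp [add_mul, pow_add]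

end Letters

section Output

variable (r : ℕ) {m : ℕ} (a b : Fin m)

@[simp]
lemma projOut_single (x : Fin m) (I : List (Fin m)) (y : Fin m) (c : ℂ) :
    projOut x (single (I, y) c) = if y = x then single (I, y) c else 0 := by
  simp [projOut, smul_ite]

/-- The map `φ^I_a ↦ φ^I_b`, zero on the cochains with output other than `a`. -/
noncomputable def transferOut : Cochain m →ₗ[ℂ] Cochain m := tau a b ∘ₗ projOut a

@[simp]
lemma transferOut_single (I : List (Fin m)) (x : Fin m) (c : ℂ) :
    transferOut a b (single (I, x) c) = if x = a then single (I, b) c else 0 := by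
  by_cases hx : x = a <;> simp [transferOut, tau, hx]

lemma transferOut_lam (J : List (Fin m)) (f : Cochain m) :
    transferOut a b (lam J f) = lam J (transferOut a b f) := by
  suffices transferOut a b ∘ₗ lam J = lam J ∘ₗ transferOut a b from LinearMap.congr_fun this f
  refine linearMap_ext_single fun I x => ?_
  by_cases hx : x = a <;> simp [hx]

lemma transferOut_rho (J : List (Fin m)) (f : Cochain m) :
    transferOut a b (rho r J f) = rho r J (transferOut a b f) := by
  suffices transferOut a b ∘ₗ rho r J = rho r J ∘ₗ transferOut a b from LinearMap.congr_fun this f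
  refine linearMap_ext_single fun I x => ?_
  by_cases hx : x = a <;> simp [hx]

lemma twist_transferOut (f : Cochain m) :
    twist r (transferOut a b f) = (-1 : ℂ) ^ (par r a + par r b) • transferOut a b (twist r f) := by
  suffices twist r ∘ₗ transferOut a b =
    (-1 : ℂ) ^ (par r a + par r b) • transferOut a b ∘ₗ twist r from LinearMap.congr_fun this f
  refine linearMap_ext_single fun I x => ?_
  by_cases hx : x = a
  · have hsq : (-1 : ℂ) ^ par r a * (-1) ^ par r a = 1 := by simp [← mul_pow]
    simp only [hx, LinearMap.comp_apply, LinearMap.smul_apply, transferOut_single, twist_single,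
      if_pos, smul_single, smul_eq_mul, ppar, pow_add]
    congr 1
    linear_combination -(-1 : ℂ) ^ lpar r I * (-1) ^ par r b * hsq
  · simp [hx]

variable {a b}

lemma transferOut_transferOut (hab : a ≠ b) (f : Cochain m) :
    transferOut a b (transferOut a b f) = 0 := by
  suffices transferOut a b ∘ₗ transferOut a b = 0 from LinearMap.congr_fun this f
  refine linearMap_ext_single fun I x => ?_
  by_cases hx : x = a <;> simp [hx, hab.symm]

end Output

section Differential

variable (r : ℕ) {m : ℕ} (a b : Fin m)

/-- The map `φ ↦ (-1)^{|φ|} φ ∘ d`, for `d = φ^{(a,a)}_b`, which replaces a letter `b` of the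
multi-index by `aa`; it is `d ∘ φ - D φ`. -/
noncomputable def innerD : Cochain m →ₗ[ℂ] Cochain m := (comp r).flip (dd a b) ∘ₗ twist r

lemma innerD_apply (f : Cochain m) : innerD r a b f = comp r (twist r f) (dd a b) := rfl

lemma Dop_apply (f : Cochain m) : Dop r a b f = comp r (dd a b) f - innerD r a b f := rfl

lemma comp_dd_apply (f : Cochain m) :
    comp r (dd a b) f =
      lam [a] (transferOut a b f) + (-1 : ℂ) ^ par r a • rho r [a] (transferOut a b f) := by
  suffices comp r (dd a b) = lam [a] ∘ₗ transferOut a b +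
    (-1 : ℂ) ^ par r a • rho r [a] ∘ₗ transferOut a b from LinearMap.congr_fun this f
  refine linearMap_ext_single fun I x => ?_
  have basisComp_dd : basisComp r ([a, a], b) (I, x) =
      (if a = x then (-1 : ℂ) ^ (par r a * ppar r (I, x)) • single (I ++ [a], b) 1 else 0) +
        if a = x then single (a :: I, b) 1 else 0 := by
    simp [basisComp, Fin.sum_univ_two, insertAt, ← two_mul, mul_assoc]
  obtain rfl | hx := eq_or_ne a x
  · have hsq : (-1 : ℂ) ^ (par r a * par r a) = (-1) ^ par r a := by
      unfold par; split_ifs <;> simp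
    simp [dd, basisComp_dd, ppar, mul_add, pow_add, hsq, mul_comm, add_comm]
  · simp [dd, basisComp_dd, hx, hx.symm]

lemma basisComp_cons (i : Fin m) (I : List (Fin m)) (x : Fin m) (q : List (Fin m) × Fin m) :
    basisComp r (i :: I, x) q = (-1 : ℂ) ^ (par r i * ppar r q) •
      (lam [i] (basisComp r (I, x) q) + if i = q.2 then single (q.1 ++ I, x) 1 else 0) := by
  simp only [basisComp, List.length_cons]
  rw [Fin.sum_univ_succ, add_comm, smul_add, map_sum, Finset.smul_sum]
  congr 1
  · refine Finset.sum_congr rfl fun k _ => ?_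
    split_ifs with hk <;> simp_all [insertAt, add_mul, pow_add]
  · split_ifs with hi <;> simp_all [insertAt]

@[simp]
lemma innerD_single (p : List (Fin m) × Fin m) (c : ℂ) :
    innerD r a b (single p c) = ((-1 : ℂ) ^ ppar r p * c) • basisComp r p ([a, a], b) := by
  simp [innerD, dd, -Finsupp.single_mul]

variable {a b} {r}

lemma innerD_lam (hb : par r b = 1) (i : Fin m) (f : Cochain m) :
    innerD r a b (lam [i] f) =
      lam [i] (innerD r a b f) + if i = b then lam [a] (lam [a] (twist r f)) else 0 := by
  suffices innerD r a b ∘ₗ lam [i] =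
      lam [i] ∘ₗ innerD r a b + if i = b then lam [a] ∘ₗ lam [a] ∘ₗ twist r else 0 by
    have := LinearMap.congr_fun this f
    split_ifs at this ⊢ <;> simpa using this
  refine linearMap_ext_single fun I x => ?_
  have hd : Odd (ppar r ([a, a], b)) := by simp [ppar, hb, ← two_mul]
  have hsign : (-1 : ℂ) ^ ppar r (i :: I, x) * (-1) ^ (par r i * ppar r ([a, a], b)) =
      (-1) ^ ppar r (I, x) := by
    rw [mul_comm (par r i), pow_mul, hd.neg_one_pow]
    simp only [ppar, lpar_cons, pow_add]
    linear_combination (-1 : ℂ) ^ lpar r I * (-1) ^ par r x *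
      (by simp [← mul_pow] : (-1 : ℂ) ^ par r i * (-1) ^ par r i = 1)
  rw [LinearMap.comp_apply, ← single_cons, innerD_single, basisComp_cons, mul_one, smul_smul, hsign]
  split_ifs with hi <;> simp

lemma twist_innerD (hb : par r b = 1) (f : Cochain m) :
    twist r (innerD r a b f) = -innerD r a b (twist r f) := by
  suffices twist r ∘ₗ innerD r a b = -(innerD r a b ∘ₗ twist r) from LinearMap.congr_fun this f
  refine linearMap_ext_lam (fun x => ?_) fun i f ih => ?_
  · simp [basisComp]
  · simp only [LinearMap.comp_apply, LinearMap.neg_apply] at ih ⊢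
    simp only [twist_lam, map_smul, innerD_lam hb, map_add, ih]
    obtain rfl | hi := eq_or_ne i b
    · simp [twist_lam, hb, smul_smul, ← mul_pow, add_comm]
    · simp [hi]

lemma innerD_innerD (hab : a ≠ b) (hb : par r b = 1) (f : Cochain m) :
    innerD r a b (innerD r a b f) = 0 := by
  suffices innerD r a b ∘ₗ innerD r a b = 0 from LinearMap.congr_fun this f
  refine linearMap_ext_lam (fun x => ?_) fun i f ih => ?_
  · simp [basisComp]
  · simp only [LinearMap.comp_apply, LinearMap.zero_apply] at ih ⊢
    obtain rfl | hi := eq_or_ne i b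
    · simp [innerD_lam hb, ih, hab, twist_innerD hb]
    · simp [innerD_lam hb, ih, hi]

lemma innerD_rho (hb : par r b = 1) {c : Fin m} (hcb : c ≠ b) (f : Cochain m) :
    innerD r a b (rho r [c] f) = rho r [c] (innerD r a b f) := by
  suffices innerD r a b ∘ₗ rho r [c] = rho r [c] ∘ₗ innerD r a b from LinearMap.congr_fun this f
  refine linearMap_ext_lam (fun x => ?_) fun i f ih => ?_
  · simp [basisComp, hcb]
  · simp only [LinearMap.comp_apply] at ih ⊢
    obtain rfl | hi := eq_or_ne i b
    · simp [rho_lam, innerD_lam hb, ih, twist_rho, hb, smul_smul, ← pow_add, ← two_mul]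
    · simp [rho_lam, innerD_lam hb, ih, hi]

lemma transferOut_comp (f g : Cochain m) :
    transferOut a b (comp r f g) = comp r (transferOut a b f) g := by
  suffices transferOut a b ∘ₗ (comp r).flip g = (comp r).flip g ∘ₗ transferOut a b from
    LinearMap.congr_fun this f
  refine linearMap_ext_single fun I x => ?_
  suffices transferOut a b ∘ₗ comp r (single (I, x) 1) =
    comp r (transferOut a b (single (I, x) 1)) from LinearMap.congr_fun this g
  refine linearMap_ext_single fun J y => ?_
  by_cases hx : x = a <;> simp [basisComp, hx, apply_ite]

lemma innerD_transferOut (f : Cochain m) :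
    innerD r a b (transferOut a b f) =
      (-1 : ℂ) ^ (par r a + par r b) • transferOut a b (innerD r a b f) := by
  simp only [innerD_apply, twist_transferOut, map_smul, LinearMap.smul_apply, transferOut_comp]

lemma Dop_Dop (ha : par r a = 0) (hb : par r b = 1) (f : Cochain m) :
    Dop r a b (Dop r a b f) = 0 := by
  have hab : a ≠ b := by rintro rfl; omega
  simp [Dop_apply, comp_dd_apply, ha, hb, innerD_innerD hab hb, innerD_transferOut, innerD_lam hb,
    innerD_rho hb hab, hab, transferOut_lam, transferOut_rho, transferOut_transferOut hab]

end Differential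

section Degree

variable {r m n k : ℕ} {a b x y : Fin m}

lemma Cnx_eq_supported (m n : ℕ) (x : Fin m) :
    Cnx m n x = Finsupp.supported ℂ ℂ {p | p.1.length = n ∧ p.2 = x} := by
  rw [Finsupp.supported_eq_span_single, Cnx]
  congr 1
  ext f
  simp [eq_comm, and_assoc]

lemma single_mem_Cnx {I : List (Fin m)} (hI : I.length = n) (c : ℂ) :
    (single (I, x) c : Cochain m) ∈ Cnx m n x := by
  rw [Cnx_eq_supported]
  exact Finsupp.single_mem_supported ℂ c ⟨hI, rfl⟩

lemma Cnx_le {P : Submodule ℂ (Cochain m)}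
    (h : ∀ I : List (Fin m), I.length = n → single (I, x) 1 ∈ P) : Cnx m n x ≤ P := by
  rw [Cnx, Submodule.span_le]
  rintro f ⟨I, hI, rfl⟩
  exact h I hI

instance finiteDimensional_Cnx (m n : ℕ) (x : Fin m) : FiniteDimensional ℂ (Cnx m n x) := by
  apply FiniteDimensional.span_of_finite
  refine ((List.finite_length_eq (Fin m) n).image
    (fun I => (single (I, x) 1 : Cochain m))).subset ?_
  rintro f ⟨I, hI, rfl⟩
  exact ⟨I, hI, rfl⟩

lemma finrank_Cnx (m n : ℕ) (x : Fin m) : Module.finrank ℂ (Cnx m n x) = m ^ n := by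
  let e : {p : List (Fin m) × Fin m | p.1.length = n ∧ p.2 = x} ≃ List.Vector (Fin m) n :=
    { toFun := fun p => ⟨p.1.1, p.2.1⟩
      invFun := fun v => ⟨(v.1, x), v.2, rfl⟩
      left_inv := by rintro ⟨⟨I, y⟩, hI, rfl⟩; rfl
      right_inv := fun v => rfl }
  rw [Cnx_eq_supported, (Finsupp.supportedEquivFinsupp _ ≪≫ₗ Finsupp.domLCongr e).finrank_eq,
    Module.finrank_finsupp_self, card_vector, Fintype.card_fin]

lemma lam_mem_Cnx (i : Fin m) {f : Cochain m} (hf : f ∈ Cnx m n x) :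
    lam [i] f ∈ Cnx m (n + 1) x := by
  refine Cnx_le (P := (Cnx m (n + 1) x).comap (lam [i])) (fun I hI => ?_) hf
  simpa using single_mem_Cnx (by simp [hI]) 1

lemma twist_mem_Cnx {f : Cochain m} (hf : f ∈ Cnx m n x) : twist r f ∈ Cnx m n x := by
  refine Cnx_le (P := (Cnx m n x).comap (twist r)) (fun I hI => ?_) hf
  simpa using single_mem_Cnx hI _

lemma comp_mem_Cnx {q : ℕ} {f g : Cochain m} (hf : f ∈ Cnx m n x) (hg : g ∈ Cnx m q y)
    (hk : k + 1 = n + q) : comp r f g ∈ Cnx m k x := by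
  refine Cnx_le (P := (Cnx m k x).comap ((comp r).flip g)) (fun I hI => ?_) hf
  refine Cnx_le (P := (Cnx m k x).comap (comp r (single (I, x) 1))) (fun J hJ => ?_) hg
  simp only [Submodule.mem_comap, comp_single_single, basisComp]
  refine Submodule.smul_mem _ _ (Submodule.sum_mem _ fun l _ => ?_)
  split_ifs
  · refine Submodule.smul_mem _ _ (single_mem_Cnx ?_ 1)
    have := l.isLt
    simp only [insertAt, List.length_append, List.length_take, List.length_drop]
    grind
  · exact Submodule.zero_mem _

lemma dd_mem_Cnx (a b : Fin m) : dd a b ∈ Cnx m 2 b :=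
  single_mem_Cnx (by simp) 1

lemma innerD_mem_Cnx {f : Cochain m} (hf : f ∈ Cnx m n x) :
    innerD r a b f ∈ Cnx m (n + 1) x := by
  rw [innerD_apply]
  exact comp_mem_Cnx (twist_mem_Cnx hf) (dd_mem_Cnx a b) (by omega)

lemma projOut_of_mem_Cnx {f : Cochain m} (hf : f ∈ Cnx m n x) :
    projOut y f = if x = y then f else 0 := by
  split_ifs with hxy
  · refine Cnx_le (P := LinearMap.eqLocus (projOut y) LinearMap.id) (fun I _ => ?_) hf
    simp [hxy]
  · refine Cnx_le (P := ker (projOut y)) (fun I _ => ?_) hf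
    simp [hxy]

lemma map_projOut_eq_bot_of_le_Cnx (hxy : x ≠ y) {P : Submodule ℂ (Cochain m)}
    (hP : P ≤ Cnx m n x) : P.map (projOut y) = ⊥ :=
  LinearMap.le_ker_iff_map.1 fun _ hf => (projOut_of_mem_Cnx (hP hf)).trans (if_neg hxy)

lemma Dx_apply (hab : a ≠ b) {f : Cochain m} (hf : f ∈ Cnx m n x) :
    Dx r a b x f = -innerD r a b f := by
  by_cases hx : x = a
  · rw [Dx, if_pos hx, LinearMap.comp_apply, Dop_apply, map_sub,
      projOut_of_mem_Cnx (comp_mem_Cnx (k := n + 1) (dd_mem_Cnx a b) hf (by omega)),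
      projOut_of_mem_Cnx (innerD_mem_Cnx hf), if_neg hab.symm, if_pos hx, zero_sub]
  · have hS : transferOut a b f = 0 := by
      rw [transferOut, LinearMap.comp_apply, projOut_of_mem_Cnx hf, if_neg hx, map_zero]
    simp [Dx, hx, Dop_apply, comp_dd_apply, hS]

lemma mem_Zx (hab : a ≠ b) {f : Cochain m} :
    f ∈ Zx r a b x n ↔ f ∈ Cnx m n x ∧ innerD r a b f = 0 := by
  rw [Zx, Submodule.mem_inf]
  refine and_congr_right fun hf => ?_
  rw [LinearMap.mem_ker, Dx_apply hab hf, neg_eq_zero]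

lemma Bx_succ (hab : a ≠ b) : Bx r a b x (n + 1) = (Cnx m n x).map (innerD r a b) := by
  rw [← Submodule.map_neg]
  exact SetLike.coe_injective (Set.image_congr fun f hf => Dx_apply hab hf)

instance finiteDimensional_Zx : FiniteDimensional ℂ (Zx r a b x n) :=
  Submodule.finiteDimensional_inf_left _ _

instance finiteDimensional_Bx : FiniteDimensional ℂ (Bx r a b x n) := by
  cases n <;> unfold Bx <;> infer_instance

lemma finrank_Bx_succ_add_finrank_Zx :
    Module.finrank ℂ (Bx r a b x (n + 1)) + Module.finrank ℂ (Zx r a b x n) = m ^ n :=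
  (finrank_map_add_finrank_inf_ker _ _).trans (finrank_Cnx m n x)

end Degree

section FirstLetter

variable {r m n : ℕ} {a b x : Fin m}

/-- The map `φ^{jI}_x ↦ φ^I_x`, zero on the basis cochains whose multi-index does not start with
`j`: the component of a cochain at the first letter `j`. -/
noncomputable def uncons (j : Fin m) : Cochain m →ₗ[ℂ] Cochain m :=
  Finsupp.lcomapDomain (fun p => (j :: p.1, p.2)) fun p q h => by
    simpa [Prod.ext_iff] using h

lemma uncons_apply (j : Fin m) (f : Cochain m) (p : List (Fin m) × Fin m) :
    uncons j f p = f (j :: p.1, p.2) := rfl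

@[simp]
lemma uncons_single_nil (j x : Fin m) (c : ℂ) : uncons j (single ([], x) c) = 0 := by
  ext p
  simp [uncons_apply]

@[simp]
lemma uncons_lam (i j : Fin m) (f : Cochain m) :
    uncons j (lam [i] f) = if i = j then f else 0 := by
  suffices uncons j ∘ₗ lam [i] = if i = j then LinearMap.id else 0 by
    have := LinearMap.congr_fun this f
    split_ifs at this ⊢ <;> simpa using this
  refine linearMap_ext_single fun I x => Finsupp.ext fun p => ?_
  split_ifs with hij <;> simp [uncons_apply, Finsupp.single_apply, Prod.ext_iff, hij]

lemma sum_lam_uncons {f : Cochain m} (hf : f ∈ Cnx m (n + 1) x) :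
    ∑ j, lam [j] (uncons j f) = f := by
  suffices Cnx m (n + 1) x ≤ LinearMap.eqLocus (∑ j, lam [j] ∘ₗ uncons j) LinearMap.id by
    simpa using this hf
  refine Cnx_le fun I hI => ?_
  obtain ⟨i, I, rfl⟩ := List.exists_cons_of_length_eq_add_one hI
  simp [single_cons i I, -lam_single, apply_ite]

lemma uncons_mem_Cnx (j : Fin m) {f : Cochain m} (hf : f ∈ Cnx m (n + 1) x) :
    uncons j f ∈ Cnx m n x := by
  refine Cnx_le (P := (Cnx m n x).comap (uncons j)) (fun I hI => ?_) hf
  obtain ⟨i, I, rfl⟩ := List.exists_cons_of_length_eq_add_one hI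
  rw [Submodule.mem_comap, single_cons, uncons_lam]
  split_ifs
  · exact single_mem_Cnx (by simpa using hI) 1
  · exact Submodule.zero_mem _

lemma uncons_innerD (hb : par r b = 1) (j : Fin m) (f : Cochain m) :
    uncons j (innerD r a b f) =
      innerD r a b (uncons j f) + if j = a then lam [a] (twist r (uncons b f)) else 0 := by
  suffices uncons j ∘ₗ innerD r a b = innerD r a b ∘ₗ uncons j +
      if j = a then lam [a] ∘ₗ twist r ∘ₗ uncons b else 0 by
    have := LinearMap.congr_fun this f
    split_ifs at this ⊢ <;> simpa using this
  refine linearMap_ext_lam (fun x => ?_) fun i f _ => ?_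
  · split_ifs <;> simp [basisComp]
  · rw [LinearMap.comp_apply, innerD_lam hb]
    by_cases hij : i = j <;> by_cases hib : i = b <;> by_cases hja : j = a <;>
      simp_all [eq_comm]

lemma innerD_eq_zero_of_mem_Cnx_zero {f : Cochain m} (hf : f ∈ Cnx m 0 x) :
    innerD r a b f = 0 := by
  refine Cnx_le (P := ker (innerD r a b)) (fun I hI => ?_) hf
  simp [List.eq_nil_of_length_eq_zero hI, basisComp]

lemma mem_Zx_succ (hab : a ≠ b) (hb : par r b = 1) {f : Cochain m} :
    f ∈ Zx r a b x (n + 1) ↔ f ∈ Cnx m (n + 1) x ∧ ∀ j,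
      innerD r a b (uncons j f) + (if j = a then lam [a] (twist r (uncons b f)) else 0) = 0 := by
  rw [mem_Zx hab]
  refine and_congr_right fun hf => ?_
  simp only [← uncons_innerD hb]
  refine ⟨fun h j => by rw [h, map_zero], fun h => ?_⟩
  rw [← sum_lam_uncons (innerD_mem_Cnx hf)]
  simp [h]

/-- The cochains `f ∈ C^n_x` for which `λ_a f` is a coboundary of the restricted complex. -/
noncomputable def lamExact (r : ℕ) {m : ℕ} (a b x : Fin m) (n : ℕ) : Submodule ℂ (Cochain m) :=
  Cnx m n x ⊓ (Bx r a b x (n + 1)).comap (lam [a])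

lemma mem_lamExact (hab : a ≠ b) {f : Cochain m} :
    f ∈ lamExact r a b x n ↔ f ∈ Cnx m n x ∧ ∃ u ∈ Cnx m n x, innerD r a b u = lam [a] f := by
  rw [lamExact, Bx_succ hab, Submodule.mem_inf, Submodule.mem_comap, Submodule.mem_map]

lemma lamExact_zero (hab : a ≠ b) : lamExact r a b x 0 = ⊥ := by
  refine (Submodule.eq_bot_iff _).2 fun f hf => lam_injective [a] ?_
  obtain ⟨-, u, hu, huf⟩ := (mem_lamExact hab).1 hf
  rw [← huf, innerD_eq_zero_of_mem_Cnx_zero hu, map_zero]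

lemma lamExact_le_Zx (hab : a ≠ b) (hb : par r b = 1) : lamExact r a b x n ≤ Zx r a b x n := by
  intro f hf
  obtain ⟨hfC, u, -, huf⟩ := (mem_lamExact hab).1 hf
  refine (mem_Zx hab).2 ⟨hfC, lam_injective [a] ?_⟩
  calc lam [a] (innerD r a b f) = innerD r a b (lam [a] f) := by simp [innerD_lam hb, hab]
    _ = lam [a] 0 := by rw [← huf, innerD_innerD hab hb, map_zero]

lemma innerD_lam_twist (hab : a ≠ b) (hb : par r b = 1) {f : Cochain m}
    (hf : f ∈ Zx r a b x n) :
    innerD r a b (lam [b] (twist r f)) = lam [a] (lam [a] f) := by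
  have htw : innerD r a b (twist r f) = 0 := by
    rw [← neg_eq_zero, ← twist_innerD hb, ((mem_Zx hab).1 hf).2, map_zero]
  simp [innerD_lam hb, htw]

/-- In cohomology, the kernel of left multiplication by `a` is its image. -/
lemma lamExact_succ (hab : a ≠ b) (hb : par r b = 1) :
    lamExact r a b x (n + 1) = Bx r a b x (n + 1) ⊔ (Zx r a b x n).map (lam [a]) := by
  refine le_antisymm (fun f hf => ?_) (sup_le ?_ ?_)
  · obtain ⟨-, u, hu, huf⟩ := (mem_lamExact hab).1 hf
    have hua : innerD r a b (uncons a u) + lam [a] (twist r (uncons b u)) = f := by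
      simpa [huf] using (uncons_innerD (a := a) hb a u).symm
    have hub : innerD r a b (uncons b u) = 0 := by
      simpa [huf, hab, hab.symm] using (uncons_innerD (a := a) hb b u).symm
    rw [← hua, Bx_succ hab]
    refine Submodule.add_mem_sup (Submodule.mem_map_of_mem (uncons_mem_Cnx a hu))
      (Submodule.mem_map_of_mem ((mem_Zx hab).2 ⟨twist_mem_Cnx (uncons_mem_Cnx b hu), ?_⟩))
    rw [← neg_eq_zero, ← twist_innerD hb, hub, map_zero]
  · rw [Bx_succ hab]
    rintro _ ⟨v, hv, rfl⟩
    exact (mem_lamExact hab).2 ⟨innerD_mem_Cnx hv, lam [a] v, lam_mem_Cnx a hv,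
      by simp [innerD_lam hb, hab]⟩
  · rintro _ ⟨z, hz, rfl⟩
    have hzC := ((mem_Zx hab).1 hz).1
    exact (mem_lamExact hab).2 ⟨lam_mem_Cnx a hzC, lam [b] (twist r z),
      lam_mem_Cnx b (twist_mem_Cnx hzC), innerD_lam_twist hab hb hz⟩

lemma Bx_succ_inf_map_lam_Zx (hab : a ≠ b) (hb : par r b = 1) :
    Bx r a b x (n + 1) ⊓ (Zx r a b x n).map (lam [a]) = (lamExact r a b x n).map (lam [a]) := by
  refine le_antisymm ?_ (le_inf ?_ (Submodule.map_mono (lamExact_le_Zx hab hb)))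
  · rintro _ ⟨hB, z, hz, rfl⟩
    exact Submodule.mem_map_of_mem ⟨((mem_Zx hab).1 hz).1, hB⟩
  · exact Submodule.map_le_iff_le_comap.2 inf_le_right

lemma finrank_lamExact_succ_add (hab : a ≠ b) (hb : par r b = 1) :
    Module.finrank ℂ (lamExact r a b x (n + 1)) + Module.finrank ℂ (lamExact r a b x n) =
      m ^ n := by
  rw [lamExact_succ hab hb, ← finrank_map_of_injective (lamExact r a b x n) (lam_injective [a]),
    ← Bx_succ_inf_map_lam_Zx hab hb, Submodule.finrank_sup_add_finrank_inf_eq,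
    finrank_map_of_injective _ (lam_injective [a]), finrank_Bx_succ_add_finrank_Zx]

lemma map_twist_uncons_Zx (hab : a ≠ b) (hb : par r b = 1) :
    (Zx r a b x (n + 1)).map (twist r ∘ₗ uncons b) = lamExact r a b x n := by
  ext g
  constructor
  · rintro ⟨f, hf, rfl⟩
    obtain ⟨hfC, hf⟩ := (mem_Zx_succ hab hb).1 hf
    refine (mem_lamExact hab).2 ⟨twist_mem_Cnx (uncons_mem_Cnx b hfC), -uncons a f,
      Submodule.neg_mem _ (uncons_mem_Cnx a hfC), ?_⟩
    have hfa := hf a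
    rw [if_pos rfl] at hfa
    rw [map_neg, neg_eq_of_add_eq_zero_right hfa]
    rfl
  · intro hg
    obtain ⟨hgC, u, hu, hug⟩ := (mem_lamExact hab).1 hg
    have hgZ := lamExact_le_Zx hab hb hg
    refine ⟨lam [b] (twist r g) - lam [a] u, (mem_Zx hab).2 ⟨Submodule.sub_mem _
      (lam_mem_Cnx b (twist_mem_Cnx hgC)) (lam_mem_Cnx a hu), ?_⟩, by simp [hab]⟩
    rw [map_sub, innerD_lam_twist hab hb hgZ, innerD_lam hb, hug, if_neg hab, add_zero, sub_self]

/-- The map `(f_j)_j ↦ ∑ j, λ_j f_j`, for families indexed by the letters satisfying `p`. -/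
noncomputable def sumLam (p : Fin m → Prop) [DecidablePred p] (P : Submodule ℂ (Cochain m)) :
    ({j : Fin m // p j} → P) →ₗ[ℂ] Cochain m :=
  ∑ j : {j // p j}, lam [(j : Fin m)] ∘ₗ P.subtype ∘ₗ LinearMap.proj j

lemma sumLam_apply (p : Fin m → Prop) [DecidablePred p] (P : Submodule ℂ (Cochain m))
    (z : {j : Fin m // p j} → P) : sumLam p P z = ∑ j, lam [j.1] (z j : Cochain m) := by
  simp only [sumLam, LinearMap.sum_apply, LinearMap.comp_apply, LinearMap.proj_apply,
    Submodule.subtype_apply]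

lemma finrank_range_sumLam (p : Fin m → Prop) [DecidablePred p] (P : Submodule ℂ (Cochain m))
    [FiniteDimensional ℂ P] :
    Module.finrank ℂ (range (sumLam p P)) =
      Fintype.card {j : Fin m // p j} * Module.finrank ℂ P := by
  rw [LinearMap.finrank_range_of_inj, Module.finrank_pi_fintype, Finset.sum_const,
    Finset.card_univ, smul_eq_mul]
  refine (injective_iff_map_eq_zero _).2 fun z hz => funext fun j => Subtype.ext ?_
  have hj := congrArg (uncons (j : Fin m)) hz
  simpa only [sumLam_apply, map_sum, uncons_lam, Subtype.coe_inj, Finset.sum_ite_eq',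
    Finset.mem_univ, if_true, map_zero, Pi.zero_apply, ZeroMemClass.coe_zero] using hj

lemma Zx_inf_ker_uncons (hab : a ≠ b) (hb : par r b = 1) :
    Zx r a b x (n + 1) ⊓ ker (uncons b) = range (sumLam (· ≠ b) (Zx r a b x n)) := by
  refine le_antisymm ?_ ?_
  · rintro f ⟨hf : f ∈ Zx r a b x (n + 1), hfb : uncons b f = 0⟩
    obtain ⟨hfC, hfQ⟩ := (mem_Zx_succ hab hb).1 hf
    have hfj (j : Fin m) : uncons j f ∈ Zx r a b x n :=
      (mem_Zx hab).2 ⟨uncons_mem_Cnx j hfC, by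
        simpa only [hfb, map_zero, ite_self, add_zero] using hfQ j⟩
    refine LinearMap.mem_range.2 ⟨fun j => ⟨uncons j.1 f, hfj j.1⟩, ?_⟩
    rw [sumLam_apply]
    conv_rhs => rw [← sum_lam_uncons hfC, Fintype.sum_eq_add_sum_subtype_ne _ b, hfb]
    simp only [map_zero, zero_add]
  · rintro _ ⟨z, rfl⟩
    rw [sumLam_apply]
    refine Submodule.sum_mem _ fun j _ => ?_
    obtain ⟨hzC, hz⟩ := (mem_Zx hab).1 (z j).2
    exact ⟨(mem_Zx hab).2 ⟨lam_mem_Cnx _ hzC, by rw [innerD_lam hb, hz, map_zero, if_neg j.2,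
      add_zero]⟩, (uncons_lam _ _ _).trans (if_neg j.2)⟩

lemma finrank_Zx_succ (hab : a ≠ b) (hb : par r b = 1) :
    Module.finrank ℂ (Zx r a b x (n + 1)) =
      (m - 1) * Module.finrank ℂ (Zx r a b x n) + Module.finrank ℂ (lamExact r a b x n) := by
  have hker : ker (twist r ∘ₗ uncons b) = ker (uncons b) :=
    LinearMap.ker_comp_of_ker_eq_bot _ (LinearMap.ker_eq_bot.2 <|
      Function.LeftInverse.injective (g := twist r) (twist_twist r))
  rw [← finrank_map_add_finrank_inf_ker _ (twist r ∘ₗ uncons b), map_twist_uncons_Zx hab hb, hker,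
    Zx_inf_ker_uncons hab hb, finrank_range_sumLam, Fintype.card_subtype_compl,
    Fintype.card_subtype_eq, Fintype.card_fin, add_comm]

lemma finrank_Zx_zero (hab : a ≠ b) : Module.finrank ℂ (Zx r a b x 0) = 1 := by
  have hZ : Zx r a b x 0 = Cnx m 0 x :=
    le_antisymm inf_le_left fun f hf => (mem_Zx hab).2 ⟨hf, innerD_eq_zero_of_mem_Cnx_zero hf⟩
  rw [hZ, finrank_Cnx, pow_zero]

lemma finrank_Zx_succ_add (hab : a ≠ b) (hb : par r b = 1) (n : ℕ) :
    Module.finrank ℂ (Zx r a b x (n + 1)) + Module.finrank ℂ (Zx r a b x n) =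
      m ^ n + (m - 1) ^ (n + 1) := by
  obtain ⟨m, rfl⟩ : ∃ k, m = k + 1 := ⟨m - 1, by have := b.isLt; omega⟩
  have hZ (k : ℕ) := finrank_Zx_succ (x := x) (n := k) hab hb
  simp only [Nat.add_sub_cancel] at hZ ⊢
  induction n with
  | zero =>
    rw [hZ, lamExact_zero hab, finrank_bot, finrank_Zx_zero hab]
    ring
  | succ n ih =>
    rw [hZ (n + 1)]
    linear_combination m * ih + hZ n + finrank_lamExact_succ_add (x := x) (n := n) hab hb

lemma finrank_Zx (hab : a ≠ b) (hb : par r b = 1) (n : ℕ) :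
    Module.finrank ℂ (Zx r a b x n) = Module.finrank ℂ (Bx r a b x n) + (m - 1) ^ n := by
  cases n with
  | zero => rw [finrank_Zx_zero hab, Bx, finrank_bot, pow_zero, zero_add]
  | succ n =>
    have hZ := finrank_Zx_succ_add (x := x) hab hb n
    have hB := finrank_Bx_succ_add_finrank_Zx (r := r) (n := n) (a := a) (b := b) (x := x)
    omega

end FirstLetter

section Pair

variable {r m n : ℕ} {a b : Fin m}

lemma Dop_mem_Cnx {f : Cochain m} (hab : a ≠ b) (hf : f ∈ Cnx m n b) :
    Dop r a b f ∈ Cnx m (n + 1) b := by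
  have hD : Dop r a b f = Dx r a b b f := by rw [Dx, if_neg hab.symm]
  rw [hD, Dx_apply hab hf]
  exact Submodule.neg_mem _ (innerD_mem_Cnx hf)

lemma Dop_mem_Cpair {f : Cochain m} (hf : f ∈ Cpair m a b n) :
    Dop r a b f ∈ Cpair m a b (n + 1) := by
  refine (sup_le (fun f hf => ?_) fun f hf => ?_ :
    Cpair m a b n ≤ (Cpair m a b (n + 1)).comap (Dop r a b)) hf <;>
  rw [Submodule.mem_comap, Dop_apply]
  · exact Submodule.sub_mem _
      (Submodule.mem_sup_right (comp_mem_Cnx (dd_mem_Cnx a b) hf (by omega)))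
      (Submodule.mem_sup_left (innerD_mem_Cnx hf))
  · exact Submodule.mem_sup_right (Submodule.sub_mem _
      (comp_mem_Cnx (dd_mem_Cnx a b) hf (by omega)) (innerD_mem_Cnx hf))

instance finiteDimensional_Cpair : FiniteDimensional ℂ (Cpair m a b n) :=
  Submodule.finiteDimensional_sup _ _

instance finiteDimensional_Zpair : FiniteDimensional ℂ (Zpair r a b n) :=
  Submodule.finiteDimensional_inf_left _ _

instance finiteDimensional_Zm : FiniteDimensional ℂ (Zm r a b n) :=
  Submodule.finiteDimensional_inf_left _ _

instance finiteDimensional_Bpair : FiniteDimensional ℂ (Bpair r a b n) := by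
  cases n <;> unfold Bpair <;> infer_instance

lemma Zm_eq_Zx (hab : a ≠ b) : Zm r a b n = Zx r a b b n := by
  rw [Zm, Zx, Dx, if_neg hab.symm]

lemma Bpair_le_Zpair (ha : par r a = 0) (hb : par r b = 1) : Bpair r a b n ≤ Zpair r a b n := by
  cases n with
  | zero => exact bot_le
  | succ n =>
    rintro _ ⟨f, hf, rfl⟩
    exact ⟨Dop_mem_Cpair hf, Dop_Dop ha hb f⟩

lemma map_projOut_Cpair (hab : a ≠ b) : (Cpair m a b n).map (projOut a) = Cnx m n a := by
  have ha : (Cnx m n a).map (projOut a) = Cnx m n a := by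
    conv_rhs => rw [← Submodule.map_id (Cnx m n a)]
    exact SetLike.coe_injective (Set.image_congr fun f hf =>
      (projOut_of_mem_Cnx hf).trans (if_pos rfl))
  rw [Cpair, Submodule.map_sup, ha, map_projOut_eq_bot_of_le_Cnx hab.symm le_rfl, sup_bot_eq]

lemma Cpair_inf_ker_projOut (hab : a ≠ b) : Cpair m a b n ⊓ ker (projOut a) = Cnx m n b := by
  refine le_antisymm ?_ (le_inf le_sup_right fun f hf =>
    (projOut_of_mem_Cnx hf).trans (if_neg hab.symm))
  rintro f ⟨hf, hfa : projOut a f = 0⟩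
  obtain ⟨u, hu, v, hv, rfl⟩ := Submodule.mem_sup.1 hf
  have hu0 : u = 0 := by
    simpa [projOut_of_mem_Cnx hu, projOut_of_mem_Cnx hv, hab.symm] using hfa
  simpa [hu0] using hv

lemma Zpair_inf_ker_projOut (hab : a ≠ b) : Zpair r a b n ⊓ ker (projOut a) = Zm r a b n := by
  rw [Zpair, inf_right_comm, Cpair_inf_ker_projOut hab, Zm]

lemma map_projOut_Bpair (hab : a ≠ b) : (Bpair r a b n).map (projOut a) = Bx r a b a n := by
  cases n with
  | zero => exact Submodule.map_bot _
  | succ n =>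
    have hb : (Cnx m n b).map (Dop r a b) ≤ Cnx m (n + 1) b :=
      Submodule.map_le_iff_le_comap.2 fun f hf => Dop_mem_Cnx hab hf
    rw [Bpair, Cpair, Submodule.map_sup, Submodule.map_sup,
      map_projOut_eq_bot_of_le_Cnx hab.symm hb, sup_bot_eq, ← Submodule.map_comp, Bx, Dx,
      if_pos rfl]

lemma finrank_Cpair (hab : a ≠ b) : Module.finrank ℂ (Cpair m a b n) = 2 * m ^ n := by
  rw [← finrank_map_add_finrank_inf_ker _ (projOut a), map_projOut_Cpair hab,
    Cpair_inf_ker_projOut hab, finrank_Cnx, finrank_Cnx, two_mul]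

lemma finrank_Zpair (hab : a ≠ b) :
    Module.finrank ℂ (Zpair r a b n) =
      Module.finrank ℂ ((Zpair r a b n).map (projOut a)) + Module.finrank ℂ (Zm r a b n) := by
  rw [← finrank_map_add_finrank_inf_ker _ (projOut a), Zpair_inf_ker_projOut hab]

lemma finrank_Bpair (ha : par r a = 0) (hb : par r b = 1) :
    Module.finrank ℂ (Bpair r a b n) =
      Module.finrank ℂ (Bx r a b a n) + Module.finrank ℂ ↥(Zm r a b n ⊓ Bpair r a b n) := by
  have hab : a ≠ b := by rintro rfl; omega
  rw [← finrank_map_add_finrank_inf_ker _ (projOut a), map_projOut_Bpair hab,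
    ← Zpair_inf_ker_projOut hab, inf_right_comm, inf_eq_right.2 (Bpair_le_Zpair ha hb)]

lemma finrank_Bpair_succ_add_finrank_Zpair (hab : a ≠ b) :
    Module.finrank ℂ (Bpair r a b (n + 1)) + Module.finrank ℂ (Zpair r a b n) = 2 * m ^ n :=
  (finrank_map_add_finrank_inf_ker _ _).trans (finrank_Cpair hab)

lemma finrank_Hfhat_add :
    Module.finrank ℂ (Hfhat r a b n) + Module.finrank ℂ ↥(Zm r a b n ⊓ Bpair r a b n) =
      Module.finrank ℂ (Zm r a b n) :=
  finrank_range_mapQ_inclusion _ _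

lemma finrank_Hehat_add (ha : par r a = 0) (hb : par r b = 1) :
    Module.finrank ℂ (Hehat r a b n) + Module.finrank ℂ (Bx r a b a n) =
      Module.finrank ℂ ((Zpair r a b n).map (projOut a)) := by
  have hab : a ≠ b := by rintro rfl; omega
  have hH : Module.finrank ℂ (Hpair r a b n) + Module.finrank ℂ (Bpair r a b n) =
      Module.finrank ℂ (Zpair r a b n) := by
    rw [← finrank_quotient_comap_subtype (Zpair r a b n) (Bpair r a b n),
      inf_eq_right.2 (Bpair_le_Zpair ha hb)]
  have hE : Module.finrank ℂ (Hehat r a b n) + Module.finrank ℂ (Hfhat r a b n) =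
      Module.finrank ℂ (Hpair r a b n) := Submodule.finrank_quotient_add_finrank _
  have hF := finrank_Hfhat_add (r := r) (n := n) (a := a) (b := b)
  have hZ := finrank_Zpair (r := r) (n := n) hab
  have hB := finrank_Bpair (n := n) ha hb
  omega

/-- The rank of the connecting map `H_a^n → H_b^{n+1}` is both `dim (Z_b ∩ B) - dim B_b` in degree
`n + 1` and `dim Z_a - dim π_a(Z)` in degree `n`. -/
lemma finrank_Zm_inf_Bpair_succ_add (ha : par r a = 0) (hb : par r b = 1) :
    Module.finrank ℂ ↥(Zm r a b (n + 1) ⊓ Bpair r a b (n + 1)) +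
        Module.finrank ℂ ((Zpair r a b n).map (projOut a)) =
      Module.finrank ℂ (Bx r a b b (n + 1)) + Module.finrank ℂ (Zx r a b a n) := by
  have hab : a ≠ b := by rintro rfl; omega
  have hC := finrank_Bpair_succ_add_finrank_Zpair (r := r) (n := n) hab
  have hB := finrank_Bpair (n := n + 1) ha hb
  have hZ := finrank_Zpair (r := r) (n := n) hab
  rw [Zm_eq_Zx hab] at hZ
  have hCa := finrank_Bx_succ_add_finrank_Zx (r := r) (n := n) (a := a) (b := b) (x := a)
  have hCb := finrank_Bx_succ_add_finrank_Zx (r := r) (n := n) (a := a) (b := b) (x := b)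
  omega

end Pair

theorem Hfhat_dim_recursion_general (r : ℕ) {m : ℕ} {a b : Fin m} (ha : par r a = 0)
    (hb : par r b = 1) (n : ℕ) :
    Module.finrank ℂ (Hfhat r a b (n + 1)) =
      Module.finrank ℂ (Hehat r a b n) + (m - 2) * (m - 1) ^ n := by
  have hab : a ≠ b := by rintro rfl; omega
  have hF := finrank_Hfhat_add (r := r) (n := n + 1) (a := a) (b := b)
  have hE := finrank_Hehat_add (n := n) ha hb
  have hconn := finrank_Zm_inf_Bpair_succ_add (n := n) ha hb
  have hHa := finrank_Zx (x := a) hab hb n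
  have hHb := finrank_Zx (x := b) hab hb (n + 1)
  have hpow : (m - 1) ^ (n + 1) = (m - 2) * (m - 1) ^ n + (m - 1) ^ n := by
    obtain ⟨k, rfl⟩ : ∃ k, m = k + 2 := ⟨m - 2, by omega⟩
    simp only [Nat.add_sub_cancel, show k + 2 - 1 = k + 1 by rfl]
    ring
  have hZm : Module.finrank ℂ (Zm r a b (n + 1)) = Module.finrank ℂ (Zx r a b b (n + 1)) := by
    rw [Zm_eq_Zx hab]
  omega

/-- `dim Ĥ^n_f = dim Ĥ^{n−1}_e + (r+s−2)(r+s−1)^{n−1}` for every `n ≥ 1`. -/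
theorem Hfhat_dim_recursion (r s : ℕ) (hr : 1 ≤ r) (hs : 1 ≤ s)
    (e1 fs : Fin (r + s)) (he1 : (e1 : ℕ) = 0) (hfs : (fs : ℕ) = r + s - 1) :
    ∀ n : ℕ,
      Module.finrank ℂ (Hfhat r e1 fs (n + 1)) =
        Module.finrank ℂ (Hehat r e1 fs n) + (r + s - 2) * (r + s - 1) ^ n :=
  Hfhat_dim_recursion_general r (if_pos (by omega)) (if_neg (by omega))

end NilpotentCohomology
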